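/- Let K be a field of characteristic zero and μ ∈ K a nonzero scalar. Then the algebra Ã has a right ideal which is stably free but not free as a right Ã-module; in fact the right ideal K = {f ∈ Ã : (1+u)f ∈ ωÃ} is stably free and non-free. -/

import Mathlib

noncomputable section

/-- Defining relation of the algebra `Ã = K[u][ω;σ,δ]` with `σ(u) = μ⁻¹u`, `δ(u) = -μ⁻¹u`:
with `u = ι 0` and `ω = ι 1`, the relation is `uω = μ⁻¹ωu − μ⁻¹u`. -/
inductive TildeRel (K : Type) [Field K] (μ : K) :
    FreeAlgebra K (Fin 2) → FreeAlgebra K (Fin 2) → Prop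
  | rel : TildeRel K μ
      (FreeAlgebra.ι K (0 : Fin 2) * FreeAlgebra.ι K (1 : Fin 2))
      (μ⁻¹ • (FreeAlgebra.ι K (1 : Fin 2) * FreeAlgebra.ι K (0 : Fin 2)) -
        μ⁻¹ • FreeAlgebra.ι K (0 : Fin 2))

/-- The algebra `Ã`. -/
abbrev TildeA (K : Type) [Field K] (μ : K) := RingQuot (TildeRel K μ)

/-- The generator `u` of `Ã`. -/
def TildeA.u (K : Type) [Field K] (μ : K) : TildeA K μ :=
  RingQuot.mkAlgHom K (TildeRel K μ) (FreeAlgebra.ι K (0 : Fin 2))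

/-- The generator `ω` of `Ã`. -/
def TildeA.w (K : Type) [Field K] (μ : K) : TildeA K μ :=
  RingQuot.mkAlgHom K (TildeRel K μ) (FreeAlgebra.ι K (1 : Fin 2))

/-- Left multiplication by `r` as an endomorphism of `A` viewed as a right `A`-module
(i.e. as a left `Aᵐᵒᵖ`-module). -/
def leftMulRight {A : Type} [Ring A] (r : A) : A →ₗ[Aᵐᵒᵖ] A where
  toFun x := r * x
  map_add' := mul_add r
  map_smul' m x := by
    simp only [MulOpposite.smul_eq_mul_unop, RingHom.id_apply, mul_assoc]

/-- A right `A`-module `P` (realized as a left `Aᵐᵒᵖ`-module) is stably free if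
`P ⊕ Aⁿ ≅ Aᵐ` as right `A`-modules for some naturals `n m`. -/
def IsStablyFreeRight (A : Type) [Ring A] (P : Type) [AddCommGroup P] [Module Aᵐᵒᵖ P] : Prop :=
  ∃ n m : ℕ, Nonempty ((P × (Fin n → A)) ≃ₗ[Aᵐᵒᵖ] (Fin m → A))

/-!
Put `σ(ω) = μ⁻¹(ω - 1)`, so that `u p(ω) = σ(p)(ω) u` and every element of `Ã` is uniquely a sum
`∑ pᵢ(ω) uⁱ`: the derivation disappears and `Ã` is the skew polynomial ring `R[u; σ]` over
`R = K[ω]`. The argument works for any injective endomorphism `σ` of a commutative domain `R` and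
any nonunit `x = σ y` with `x` and `y` coprime; here `x = ω` and `y = μω + 1`.

Let `P = {f | (1 + u)f ∈ xA}` with `A = R[u; σ]`. Since `(1 + u)y = y + xu`, coprimality gives
`(1 + u)A + xA = A`, and `P` is the kernel of the split surjection `A² → A` with entries `1 + u`
and `x`; hence `P ⊕ A ≅ A²`. If `P` were free, then it would be `fA` by invariance of the rank. By
degrees, `xy ∈ P` makes `f` a constant `p ∈ R`, and then `f ∈ P` forces `x ∣ σ p`. But `P` also
contains an element with constant coefficient `x`, so `p ∣ x` and `x ∣ σ p ∣ σ x`, which is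
impossible because `x` and `σ x` are coprime.
-/

open Polynomial Function

section Modules

theorem nonempty_comap_range_prod_linearEquiv {R M N Q : Type*} [Ring R]
    [AddCommGroup M] [Module R M] [AddCommGroup N] [Module R N] [AddCommGroup Q] [Module R Q]
    [Module.Projective R Q] {f : M →ₗ[R] Q} {g : N →ₗ[R] Q} (hg : Injective g)
    (hfg : Surjective (f.coprod g)) :
    Nonempty ((g.range.comap f × Q) ≃ₗ[R] M × N) := by
  let gInv : g.range →ₗ[R] N := (LinearEquiv.ofInjective g hg).symm
  let j : g.range.comap f →ₗ[R] M × N :=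
    (g.range.comap f).subtype.prod (-(gInv ∘ₗ f.restrict fun _ hx => hx))
  have g_j (x : g.range.comap f) : g (j x).2 = -f x := by
    have h : g (gInv ⟨f x, x.2⟩) = f x :=
      congrArg Subtype.val ((LinearEquiv.ofInjective g hg).apply_symm_apply ⟨f x, x.2⟩)
    exact (map_neg g _).trans (congrArg Neg.neg h)
  have j_injective : Injective j := fun x y hxy => Subtype.ext (congrArg Prod.fst hxy)
  have range_j : j.range = (f.coprod g).ker := by
    ext ⟨m, n⟩
    rw [LinearMap.mem_range, LinearMap.mem_ker, LinearMap.coprod_apply]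
    constructor
    · rintro ⟨x, hx⟩
      have h₁ : (x : M) = m := congrArg Prod.fst hx
      have h₂ : (j x).2 = n := congrArg Prod.snd hx
      rw [← h₁, ← h₂, g_j, add_neg_cancel]
    · intro h
      have hm : f m = -g n := eq_neg_of_add_eq_zero_left h
      let x : g.range.comap f := ⟨m, -n, by rw [map_neg, hm]⟩
      refine ⟨x, Prod.ext rfl (hg ?_)⟩
      rw [g_j, neg_eq_iff_eq_neg]
      exact hm
  obtain ⟨s, hs⟩ := Module.projective_lifting_property (f.coprod g) LinearMap.id hfg
  exact ⟨lequivProdOfRightSplitExact j_injective range_j hs⟩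

theorem nonempty_linearEquiv_of_prod_linearEquiv_prod {R M N F : Type*} [Ring R]
    [InvariantBasisNumber R] [AddCommGroup M] [Module R M] [Module.Free R M] [AddCommGroup N]
    [Module R N] [Module.Free R N] [AddCommGroup F] [Module R F] [Module.Free R F]
    [Module.Finite R F] (e : (M × F) ≃ₗ[R] N × F) : Nonempty (M ≃ₗ[R] N) := by
  have : Nontrivial R := nontrivial_of_invariantBasisNumber R
  let b := Module.Free.chooseBasis R M
  let c := Module.Free.chooseBasis R N
  let d := Module.Free.chooseBasis R F
  have h := mk_eq_mk_of_basis ((b.prod d).map e) (c.prod d)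
  simp only [Cardinal.mk_sum, Cardinal.mk_fintype, Cardinal.lift_add, Cardinal.lift_natCast,
    Cardinal.lift_lift, Cardinal.add_nat_inj] at h
  obtain ⟨indexEquiv⟩ := Cardinal.lift_mk_eq.1 h
  exact ⟨b.equiv c indexEquiv⟩

theorem invariantBasisNumber_of_ringHom {A B : Type*} [Semiring A] [Semiring B]
    [InvariantBasisNumber B] (φ : A →+* B) : InvariantBasisNumber A := by
  rw [invariantBasisNumber_iff_matrix]
  intro n m P Q hPQ hQP
  refine invariantBasisNumber_iff_matrix.1 (inferInstance : InvariantBasisNumber B) n m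
    (P.map φ) (Q.map φ) ?_ ?_
  · rw [← Matrix.map_mul, hPQ, Matrix.map_one _ (map_zero φ) (map_one φ)]
  · rw [← Matrix.map_mul, hQP, Matrix.map_one _ (map_zero φ) (map_one φ)]

instance module_free_mulOpposite_self (A : Type*) [Ring A] : Module.Free Aᵐᵒᵖ A :=
  Module.Free.of_equiv (MulOpposite.opLinearEquiv Aᵐᵒᵖ : A ≃ₗ[Aᵐᵒᵖ] Aᵐᵒᵖ).symm

instance module_finite_mulOpposite_self (A : Type*) [Ring A] : Module.Finite Aᵐᵒᵖ A :=
  Module.Finite.equiv (MulOpposite.opLinearEquiv Aᵐᵒᵖ : A ≃ₗ[Aᵐᵒᵖ] Aᵐᵒᵖ).symm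

end Modules

section RightColon

variable {A : Type} [Ring A] {a w : A}

/-- The right ideal `(wA : a) = {f | a f ∈ wA}`. -/
def rightColon (a w : A) : Submodule Aᵐᵒᵖ A :=
  (Submodule.span Aᵐᵒᵖ {w}).comap (leftMulRight a)

theorem span_singleton_eq_range_leftMulRight (w : A) :
    Submodule.span Aᵐᵒᵖ {w} = (leftMulRight w).range := by
  ext x
  rw [Submodule.mem_span_singleton, LinearMap.mem_range]
  exact ⟨fun ⟨c, hc⟩ => ⟨c.unop, hc⟩, fun ⟨c, hc⟩ => ⟨MulOpposite.op c, hc⟩⟩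

theorem mem_rightColon {f : A} : f ∈ rightColon a w ↔ w ∣ a * f := by
  rw [rightColon, Submodule.mem_comap, span_singleton_eq_range_leftMulRight, LinearMap.mem_range]
  exact ⟨fun ⟨c, hc⟩ => ⟨c, hc.symm⟩, fun ⟨c, hc⟩ => ⟨c, hc.symm⟩⟩

theorem nonempty_rightColon_prod_linearEquiv (hw : IsLeftRegular w) {s t : A}
    (h : a * s + w * t = 1) : Nonempty ((rightColon a w × A) ≃ₗ[Aᵐᵒᵖ] A × A) := by
  rw [rightColon, span_singleton_eq_range_leftMulRight]
  refine nonempty_comap_range_prod_linearEquiv hw fun b => ⟨(s * b, t * b), ?_⟩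
  calc a * (s * b) + w * (t * b) = (a * s + w * t) * b := by noncomm_ring
    _ = b := by rw [h, one_mul]

theorem isStablyFreeRight_rightColon (hw : IsLeftRegular w) {s t : A} (h : a * s + w * t = 1) :
    IsStablyFreeRight A (rightColon a w) := by
  obtain ⟨e⟩ := nonempty_rightColon_prod_linearEquiv hw h
  exact ⟨1, 2, ⟨(LinearEquiv.refl _ _).prodCongr (LinearEquiv.funUnique (Fin 1) _ _) ≪≫ₗ e ≪≫ₗ
    (LinearEquiv.finTwoArrow _ _).symm⟩⟩

theorem exists_forall_dvd_of_free_rightColon [InvariantBasisNumber A] (hw : IsLeftRegular w)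
    {s t : A} (h : a * s + w * t = 1) [Module.Free Aᵐᵒᵖ (rightColon a w)] :
    ∃ f ∈ rightColon a w, ∀ g ∈ rightColon a w, f ∣ g := by
  obtain ⟨e⟩ := nonempty_rightColon_prod_linearEquiv hw h
  obtain ⟨φ⟩ := nonempty_linearEquiv_of_prod_linearEquiv_prod e
  refine ⟨φ.symm 1, (φ.symm 1).2, fun g hg => ⟨φ ⟨g, hg⟩, ?_⟩⟩
  have hφ : φ.symm (MulOpposite.op (φ ⟨g, hg⟩) • 1) = MulOpposite.op (φ ⟨g, hg⟩) • φ.symm 1 :=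
    map_smul φ.symm _ _
  rw [op_smul_eq_mul, one_mul, φ.symm_apply_apply] at hφ
  exact congrArg Subtype.val hφ

end RightColon

/-- The ring `A` is the skew polynomial ring `R[u; σ]`: writing `ι : R → A` for the inclusion of
the coefficients, `u r = σ(r) u` and every element is uniquely of the form `∑ rᵢ uⁱ`. Here
`p.eval₂ ι u` serves only as notation for that sum: it is not multiplicative in `p`. -/
structure IsSkewPolynomialRing {R A : Type*} [Semiring R] [Semiring A] (σ : R →+* R) (ι : R →+* A)
    (u : A) : Prop where
  mul_map : ∀ r, u * ι r = ι (σ r) * u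
  bijective_eval₂ : Bijective fun p : R[X] => p.eval₂ ι u

section Eval₂

variable {R A : Type*} [Semiring R] [Semiring A] {σ : R →+* R} {ι : R →+* A} {u : A}

theorem eval₂_C_mul_noncomm (r : R) (p : R[X]) : (C r * p).eval₂ ι u = ι r * p.eval₂ ι u := by
  induction p using Polynomial.induction_on' with
  | add p q hp hq => rw [mul_add, eval₂_add, hp, hq, eval₂_add, mul_add]
  | monomial n s => rw [C_mul_monomial, eval₂_monomial, eval₂_monomial, map_mul, mul_assoc]

theorem eval₂_X_mul_map (h : ∀ r, u * ι r = ι (σ r) * u) (p : R[X]) :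
    (X * p.map σ).eval₂ ι u = u * p.eval₂ ι u := by
  induction p using Polynomial.induction_on' with
  | add p q hp hq => rw [Polynomial.map_add, mul_add, eval₂_add, hp, hq, eval₂_add, mul_add]
  | monomial n s =>
    rw [map_monomial, X_mul_monomial, eval₂_monomial, eval₂_monomial, ← mul_assoc, h, mul_assoc,
      pow_succ']

end Eval₂

/-- The polynomial of coefficients of `(∑ pᵢ uⁱ) (∑ qⱼ uʲ)` in `R[u; σ]`. -/
def skewMul {R : Type*} [Semiring R] (σ : R →+* R) (p q : R[X]) : R[X] :=
  p.sum fun i r => C r * (X ^ i * q.map (σ ^ i))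

section SkewMul

variable {R : Type*} [Semiring R] (σ : R →+* R)

theorem skewMul_add (p q r : R[X]) : skewMul σ (p + q) r = skewMul σ p r + skewMul σ q r :=
  sum_add_index _ _ _ (by simp) (by simp [add_mul])

theorem skewMul_monomial (i : ℕ) (r : R) (q : R[X]) :
    skewMul σ (monomial i r) q = C r * (X ^ i * q.map (σ ^ i)) :=
  sum_monomial_index _ _ (by simp)

theorem coeff_skewMul (p q : R[X]) (k : ℕ) :
    (skewMul σ p q).coeff k =
      ∑ x ∈ Finset.HasAntidiagonal.antidiagonal k, p.coeff x.1 * (σ ^ x.1) (q.coeff x.2) := by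
  induction p using Polynomial.induction_on' with
  | add p₁ p₂ h₁ h₂ =>
    simp only [skewMul_add, coeff_add, h₁, h₂, add_mul, Finset.sum_add_distrib]
  | monomial i r =>
    rw [skewMul_monomial, ← mul_assoc, C_mul_X_pow_eq_monomial, coeff_mul]
    refine Finset.sum_congr rfl fun x _ => ?_
    rw [coeff_map, coeff_monomial]
    split_ifs with h
    · rw [h]
    · rw [zero_mul, zero_mul]

theorem coeff_zero_skewMul (p q : R[X]) :
    (skewMul σ p q).coeff 0 = p.coeff 0 * q.coeff 0 := by
  simp [coeff_skewMul]

theorem coeff_natDegree_add_skewMul (p q : R[X]) :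
    (skewMul σ p q).coeff (p.natDegree + q.natDegree) =
      p.leadingCoeff * (σ ^ p.natDegree) q.leadingCoeff := by
  rw [coeff_skewMul]
  refine Finset.sum_eq_single_of_mem (p.natDegree, q.natDegree) (by simp) ?_
  rintro ⟨i, j⟩ hij hne
  rw [Finset.HasAntidiagonal.mem_antidiagonal] at hij
  obtain hi | hj : p.natDegree < i ∨ q.natDegree < j := by grind
  · rw [coeff_eq_zero_of_natDegree_lt hi, zero_mul]
  · rw [coeff_eq_zero_of_natDegree_lt hj, map_zero, mul_zero]

variable {σ} in
theorem natDegree_eq_zero_of_skewMul_eq_C [NoZeroDivisors R] (hσ : Injective σ)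
    {p q : R[X]} {r : R} (hr : r ≠ 0) (h : skewMul σ p q = C r) : p.natDegree = 0 := by
  have hp : p ≠ 0 := by
    rintro rfl
    exact hr (C_eq_zero.1 (h.symm.trans (sum_zero_index _)))
  have hq : q ≠ 0 := by
    rintro rfl
    exact hr (C_eq_zero.1 (h.symm.trans (by simp [skewMul, sum_def])))
  have hσ_pow : Injective (σ ^ p.natDegree) := by
    rw [RingHom.coe_pow]
    exact hσ.iterate _
  have htop : (skewMul σ p q).coeff (p.natDegree + q.natDegree) ≠ 0 := by
    rw [coeff_natDegree_add_skewMul]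
    exact mul_ne_zero (leadingCoeff_ne_zero.2 hp)
      ((map_ne_zero_iff _ hσ_pow).2 (leadingCoeff_ne_zero.2 hq))
  by_contra hdeg
  rw [h, coeff_C_of_ne_zero (by omega)] at htop
  exact htop rfl

end SkewMul

theorem ne_zero_of_isCoprime_of_map_eq {R : Type*} [CommSemiring R] {σ : R →+* R} {x y : R}
    (hx : ¬IsUnit x) (hxy : σ y = x) (hcop : IsCoprime y x) : x ≠ 0 := by
  rintro rfl
  exact hx (hxy ▸ (isCoprime_zero_right.1 hcop).map σ)

namespace IsSkewPolynomialRing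

section Semiring

variable {R A : Type*} [Semiring R] [Semiring A] {σ : R →+* R} {ι : R →+* A} {u : A}

theorem eval₂_skewMul (hA : IsSkewPolynomialRing σ ι u) (p q : R[X]) :
    (skewMul σ p q).eval₂ ι u = p.eval₂ ι u * q.eval₂ ι u := by
  have X_pow (i : ℕ) : (X ^ i * q.map (σ ^ i)).eval₂ ι u = u ^ i * q.eval₂ ι u := by
    induction i with
    | zero => simp [RingHom.one_def]
    | succ i ih =>
      have h : X ^ (i + 1) * q.map (σ ^ (i + 1)) = X * (X ^ i * q.map (σ ^ i)).map σ := by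
        rw [Polynomial.map_mul, Polynomial.map_pow, map_X, map_map, pow_succ', pow_succ', mul_assoc]
        rfl
      rw [h, eval₂_X_mul_map hA.mul_map, ih, pow_succ', mul_assoc]
  induction p using Polynomial.induction_on' with
  | add p₁ p₂ h₁ h₂ => rw [skewMul_add, eval₂_add, h₁, h₂, eval₂_add, add_mul]
  | monomial i r =>
    rw [skewMul_monomial, eval₂_C_mul_noncomm, X_pow, eval₂_monomial, mul_assoc]

/-- The augmentation `∑ rᵢ uⁱ ↦ r₀` of a skew polynomial ring. -/
def constantCoeff (hA : IsSkewPolynomialRing σ ι u) : A →+* R :=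
  let coeffs : A ≃+ R[X] := (AddEquiv.ofBijective (eval₂AddMonoidHom ι u) hA.bijective_eval₂).symm
  have coeffs_eval₂ (p : R[X]) : coeffs (p.eval₂ ι u) = p :=
    Equiv.ofBijective_symm_apply_apply _ hA.bijective_eval₂ p
  { toFun a := (coeffs a).coeff 0
    map_zero' := by rw [map_zero, coeff_zero]
    map_one' := by rw [← eval₂_one ι u, coeffs_eval₂, coeff_one_zero]
    map_add' a b := by rw [map_add, coeff_add]
    map_mul' a b := by
      obtain ⟨p, rfl⟩ := hA.bijective_eval₂.2 a
      obtain ⟨q, rfl⟩ := hA.bijective_eval₂.2 b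
      dsimp only
      rw [← hA.eval₂_skewMul, coeffs_eval₂, coeffs_eval₂, coeffs_eval₂, coeff_zero_skewMul] }

theorem exists_eq_map_of_dvd [NoZeroDivisors R] (hA : IsSkewPolynomialRing σ ι u)
    (hσ : Injective σ) {r : R} (hr : r ≠ 0) {a : A} (h : a ∣ ι r) : ∃ p, a = ι p := by
  obtain ⟨b, hab⟩ := h
  obtain ⟨p, rfl⟩ := hA.bijective_eval₂.2 a
  obtain ⟨q, rfl⟩ := hA.bijective_eval₂.2 b
  have hpq : skewMul σ p q = C r := hA.bijective_eval₂.1 <| by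
    simp only [hA.eval₂_skewMul, eval₂_C, hab]
  refine ⟨p.coeff 0, ?_⟩
  have hp : p = C (p.coeff 0) :=
    eq_C_of_natDegree_eq_zero (natDegree_eq_zero_of_skewMul_eq_C hσ hr hpq)
  exact (congrArg (eval₂ ι u) hp).trans (eval₂_C ι u)

theorem map_dvd_eval₂_iff (hA : IsSkewPolynomialRing σ ι u) {r : R} {p : R[X]} :
    ι r ∣ p.eval₂ ι u ↔ C r ∣ p := by
  constructor
  · rintro ⟨b, hb⟩
    obtain ⟨q, rfl⟩ := hA.bijective_eval₂.2 b
    exact ⟨q, hA.bijective_eval₂.1 (hb.trans (eval₂_C_mul_noncomm r q).symm)⟩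
  · rintro ⟨q, rfl⟩
    exact ⟨q.eval₂ ι u, eval₂_C_mul_noncomm r q⟩

end Semiring

section Ring

variable {R A : Type*} [Semiring R] [NoZeroDivisors R] [Ring A] {σ : R →+* R} {ι : R →+* A} {u : A}

theorem isLeftRegular_map (hA : IsSkewPolynomialRing σ ι u) {r : R} (hr : r ≠ 0) :
    IsLeftRegular (ι r) := by
  refine isLeftRegular_of_non_zero_divisor _ fun b hb => ?_
  obtain ⟨p, rfl⟩ := hA.bijective_eval₂.2 b
  have h : C r * p = 0 := hA.bijective_eval₂.1 (by simpa [eval₂_C_mul_noncomm] using hb)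
  rcases mul_eq_zero.1 h with h | rfl
  · exact absurd (C_eq_zero.1 h) hr
  · exact eval₂_zero ι u

end Ring

section RightColon

variable {R : Type*} {A : Type} [CommRing R] [Ring A] {σ : R →+* R} {ι : R →+* A}
  {u : A} {x y : R}

theorem eval₂_mem_rightColon_iff (hA : IsSkewPolynomialRing σ ι u) {p : R[X]} :
    p.eval₂ ι u ∈ rightColon (1 + u) (ι x) ↔ C x ∣ p + X * p.map σ := by
  rw [mem_rightColon, add_mul, one_mul, ← eval₂_X_mul_map hA.mul_map, ← eval₂_add,
    hA.map_dvd_eval₂_iff]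

theorem exists_one_add_mul_add_mul_eq_one (hA : IsSkewPolynomialRing σ ι u)
    (hxy : σ y = x) (hcop : IsCoprime y x) :
    ∃ s t, (1 + u) * s + ι x * t = 1 := by
  obtain ⟨a, b, hab⟩ := hcop
  refine ⟨ι (y * a), ι b - ι (σ a) * u, ?_⟩
  calc (1 + u) * ι (y * a) + ι x * (ι b - ι (σ a) * u)
      = ι (y * a) + u * ι (y * a) + ι x * ι b - ι x * ι (σ a) * u := by noncomm_ring
    _ = ι (y * a + x * b) := by
      rw [hA.mul_map, map_mul σ, hxy, map_mul ι x, map_add, map_mul ι x]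
      abel
    _ = 1 := by rw [mul_comm y, mul_comm x, hab, map_one]

theorem map_mem_rightColon_iff (hA : IsSkewPolynomialRing σ ι u) {r : R} :
    ι r ∈ rightColon (1 + u) (ι x) ↔ x ∣ r ∧ x ∣ σ r := by
  have h : C r + X * C (σ r) = C r + monomial 1 (σ r) := by rw [X_mul_C, C_mul_X_eq_monomial]
  rw [← eval₂_C (a := r) ι u, hA.eval₂_mem_rightColon_iff, map_C, h]
  constructor
  · intro hdvd
    rw [C_dvd_iff_dvd_coeff] at hdvd
    exact ⟨by simpa [coeff_monomial] using hdvd 0, by simpa [coeff_C] using hdvd 1⟩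
  · rintro ⟨h₀, h₁⟩
    rw [← h]
    exact dvd_add (map_dvd C h₀) (Dvd.dvd.mul_left (map_dvd C h₁) X)

theorem map_mul_mem_rightColon (hA : IsSkewPolynomialRing σ ι u) (hxy : σ y = x) :
    ι (x * y) ∈ rightColon (1 + u) (ι x) :=
  hA.map_mem_rightColon_iff.2
    ⟨dvd_mul_right x y, by rw [map_mul, hxy]; exact dvd_mul_left x (σ x)⟩

theorem exists_mem_rightColon_coeff_zero_eq (hA : IsSkewPolynomialRing σ ι u) (hxy : σ y = x)
    (hcop : IsCoprime y x) :
    ∃ p : R[X], p.eval₂ ι u ∈ rightColon (1 + u) (ι x) ∧ p.coeff 0 = x := by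
  obtain ⟨a, b, hab⟩ := hcop
  have hC : C a * C y + C b * C x = 1 := by rw [← C_mul, ← C_mul, ← C_add, hab, C_1]
  refine ⟨C x - C (y * (a * σ x)) * X, ?_, by simp⟩
  rw [hA.eval₂_mem_rightColon_iff]
  refine ⟨1 + C (σ x * b) * X - C (σ (a * σ x)) * X ^ 2, ?_⟩
  simp only [Polynomial.map_sub, Polynomial.map_mul, map_C, map_X, map_mul σ, hxy, C_mul]
  linear_combination -(C (σ x) * X) * hC

theorem not_exists_forall_dvd_rightColon [NoZeroDivisors R] (hA : IsSkewPolynomialRing σ ι u)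
    (hσ : Injective σ) (hx : ¬IsUnit x) (hxy : σ y = x) (hcop : IsCoprime y x) :
    ¬∃ f ∈ rightColon (1 + u) (ι x), ∀ g ∈ rightColon (1 + u) (ι x), f ∣ g := by
  rintro ⟨f, hf, hdvd⟩
  have hx0 : x ≠ 0 := ne_zero_of_isCoprime_of_map_eq hx hxy hcop
  have hy0 : y ≠ 0 := by
    rintro rfl
    exact hx0 (hxy.symm.trans (map_zero σ))
  obtain ⟨p, rfl⟩ :=
    hA.exists_eq_map_of_dvd hσ (mul_ne_zero hx0 hy0) (hdvd _ (hA.map_mul_mem_rightColon hxy))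
  have x_dvd : x ∣ σ p := (hA.map_mem_rightColon_iff.1 hf).2
  have dvd_x : p ∣ x := by
    obtain ⟨q, hq, hqx⟩ := hA.exists_mem_rightColon_coeff_zero_eq hxy hcop
    rw [← hqx]
    exact (C_dvd_iff_dvd_coeff _ _).1 (hA.map_dvd_eval₂_iff.1 (hdvd _ hq)) 0
  have hcop' : IsCoprime x (σ x) := hxy ▸ hcop.map σ
  exact hx (hcop'.isUnit_of_dvd (x_dvd.trans (map_dvd σ dvd_x)))

theorem isStablyFreeRight_rightColon [NoZeroDivisors R] (hA : IsSkewPolynomialRing σ ι u)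
    (hx : x ≠ 0) (hxy : σ y = x) (hcop : IsCoprime y x) :
    IsStablyFreeRight A (rightColon (1 + u) (ι x)) := by
  obtain ⟨s, t, hst⟩ := hA.exists_one_add_mul_add_mul_eq_one hxy hcop
  exact _root_.isStablyFreeRight_rightColon (hA.isLeftRegular_map hx) hst

theorem not_free_rightColon [IsDomain R] (hA : IsSkewPolynomialRing σ ι u) (hσ : Injective σ)
    (hx : ¬IsUnit x) (hxy : σ y = x) (hcop : IsCoprime y x) :
    ¬Module.Free Aᵐᵒᵖ (rightColon (1 + u) (ι x)) := by
  intro hfree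
  have : InvariantBasisNumber A := invariantBasisNumber_of_ringHom hA.constantCoeff
  obtain ⟨s, t, hst⟩ := hA.exists_one_add_mul_add_mul_eq_one hxy hcop
  exact hA.not_exists_forall_dvd_rightColon hσ hx hxy hcop
    (exists_forall_dvd_of_free_rightColon
      (hA.isLeftRegular_map (ne_zero_of_isCoprime_of_map_eq hx hxy hcop)) hst)

end RightColon

end IsSkewPolynomialRing

namespace TildeA

variable (K : Type) [Field K] (μ : K)

theorem u_mul_w : u K μ * w K μ = μ⁻¹ • (w K μ * u K μ) - μ⁻¹ • u K μ := by
  simpa only [u, w, map_mul, map_sub, map_smul] using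
    RingQuot.mkAlgHom_rel K (TildeRel.rel (μ := μ))

@[elab_as_elim]
theorem induction {motive : TildeA K μ → Prop} (algebraMap : ∀ r, motive (algebraMap K _ r))
    (u : motive (u K μ)) (w : motive (w K μ)) (add : ∀ a b, motive a → motive b → motive (a + b))
    (mul : ∀ a b, motive a → motive b → motive (a * b)) (a : TildeA K μ) : motive a := by
  obtain ⟨x, rfl⟩ := RingQuot.mkAlgHom_surjective K (TildeRel K μ) a
  induction x using FreeAlgebra.induction with
  | grade0 r =>
    rw [AlgHom.commutes]
    exact algebraMap r
  | grade1 i => fin_cases i; exacts [u, w]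
  | mul a b ha hb => rw [map_mul]; exact mul _ _ ha hb
  | add a b ha hb => rw [map_add]; exact add _ _ ha hb

/-- The universal property of `Ã`: the homomorphism with `u ↦ x` and `ω ↦ y`. -/
def lift {B : Type*} [Ring B] [Algebra K B] (x y : B) (h : x * y = μ⁻¹ • (y * x) - μ⁻¹ • x) :
    TildeA K μ →ₐ[K] B :=
  RingQuot.liftAlgHom K ⟨FreeAlgebra.lift K ![x, y], by
    rintro _ _ ⟨⟩
    simpa using h⟩

section Lift

variable {K μ} {B : Type*} [Ring B] [Algebra K B] {x y : B}

theorem lift_u (h : x * y = μ⁻¹ • (y * x) - μ⁻¹ • x) : lift K μ x y h (u K μ) = x := by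
  simp [lift, u, RingQuot.liftAlgHom_mkAlgHom_apply]

theorem lift_w (h : x * y = μ⁻¹ • (y * x) - μ⁻¹ • x) : lift K μ x y h (w K μ) = y := by
  simp [lift, w, RingQuot.liftAlgHom_mkAlgHom_apply]

end Lift

/-- The endomorphism `ω ↦ μ⁻¹(ω - 1)` of `K[ω]` through which `u` commutes past `K[ω]`. -/
def twist : K[X] →ₐ[K] K[X] := aeval (C μ⁻¹ * (X - 1))

theorem twist_X : twist K μ X = C μ⁻¹ * (X - 1) := aeval_X _

variable {K μ} in
theorem twist_C_mul_X_add_one (hμ : μ ≠ 0) : twist K μ (C μ * X + 1) = X := by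
  rw [map_add, map_mul, map_one, twist_X, ← mul_assoc, ← algebraMap_eq, AlgHom.commutes,
    algebraMap_eq, ← C_mul, mul_inv_cancel₀ hμ, C_1]
  ring

variable {K μ} in
theorem twist_injective (hμ : μ ≠ 0) : Injective (twist K μ) := by
  have h : (aeval (C μ * X + 1)).comp (twist K μ) = AlgHom.id K K[X] := by
    ext : 1
    simp [twist_X, ← mul_assoc, ← C_mul, algebraMap_eq, hμ]
  exact LeftInverse.injective (DFunLike.congr_fun h)

/-- The inclusion of the coefficient ring `K[ω]` in `Ã`. -/
def coeffHom : K[X] →ₐ[K] TildeA K μ := aeval (w K μ)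

theorem coeffHom_X : coeffHom K μ X = w K μ := aeval_X _

theorem u_mul_coeffHom (p : K[X]) :
    u K μ * coeffHom K μ p = coeffHom K μ (twist K μ p) * u K μ := by
  induction p using Polynomial.induction_on' with
  | add p q hp hq => rw [map_add, mul_add, hp, hq, map_add, map_add, add_mul]
  | monomial n a =>
    have u_mul_w' : u K μ * w K μ = coeffHom K μ (twist K μ X) * u K μ := by
      rw [u_mul_w, twist_X, ← smul_eq_C_mul, map_smul, map_sub, coeffHom_X, map_one, smul_mul_assoc,
        sub_mul, one_mul, smul_sub]
    have pow_case (n : ℕ) :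
        u K μ * coeffHom K μ (X ^ n) = coeffHom K μ (twist K μ (X ^ n)) * u K μ := by
      induction n with
      | zero => simp
      | succ n ih =>
        rw [pow_succ, map_mul, map_mul, map_mul, ← mul_assoc, ih, mul_assoc, coeffHom_X, u_mul_w',
          mul_assoc]
    rw [← C_mul_X_pow_eq_monomial, ← smul_eq_C_mul, map_smul, map_smul, map_smul, mul_smul_comm,
      pow_case, smul_mul_assoc]

/-- The action of `Ã` on itself by left multiplication, in terms of normal forms: the polynomial
`∑ pᵢ(ω) Xⁱ` stands for `∑ pᵢ(ω) uⁱ`. -/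
def regularRep : TildeA K μ →ₐ[K] Module.End K K[X][X] :=
  lift K μ (LinearMap.mulLeft K X ∘ₗ (mapAlgHom (twist K μ)).toLinearMap)
    (LinearMap.mulLeft K (C X)) <| LinearMap.ext fun p => by
      have smul_eq (q : K[X][X]) : μ⁻¹ • q = C (C μ⁻¹) * q := Algebra.smul_def μ⁻¹ q
      have twist_X' : (twist K μ : K[X] →+* K[X]) X = C μ⁻¹ * (X - 1) := twist_X K μ
      change X * (C X * p).map (twist K μ : K[X] →+* K[X]) =
        μ⁻¹ • (C X * (X * p.map (twist K μ : K[X] →+* K[X]))) -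
          μ⁻¹ • (X * p.map (twist K μ : K[X] →+* K[X]))
      rw [Polynomial.map_mul, map_C, twist_X', smul_eq, smul_eq, C_mul, C_sub, C_1]
      ring

theorem regularRep_u (p : K[X][X]) :
    regularRep K μ (u K μ) p = X * p.map (twist K μ : K[X] →+* K[X]) := by
  rw [regularRep, lift_u]
  rfl

theorem regularRep_w (p : K[X][X]) : regularRep K μ (w K μ) p = C X * p := by
  rw [regularRep, lift_w]
  rfl

theorem regularRep_u_pow_one (n : ℕ) : regularRep K μ (u K μ ^ n) 1 = X ^ n := by
  induction n with
  | zero => simp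
  | succ n ih =>
    rw [pow_succ', map_mul, Module.End.mul_apply, ih, regularRep_u, Polynomial.map_pow, map_X,
      pow_succ']

theorem regularRep_coeffHom (p : K[X]) (q : K[X][X]) :
    regularRep K μ (coeffHom K μ p) q = C p * q := by
  have h : (regularRep K μ).comp (coeffHom K μ) = (Algebra.lmul K K[X][X]).comp CAlgHom := by
    ext1
    ext1 r
    simp [coeffHom_X, regularRep_w]
  exact congrArg (fun φ : K[X] →ₐ[K] Module.End K K[X][X] => φ p q) h

theorem regularRep_eval₂_one (p : K[X][X]) :
    regularRep K μ (p.eval₂ (coeffHom K μ : K[X] →+* TildeA K μ) (u K μ)) 1 = p := by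
  induction p using Polynomial.induction_on' with
  | add p q hp hq => rw [eval₂_add, map_add, LinearMap.add_apply, hp, hq]
  | monomial n p =>
    rw [eval₂_monomial, map_mul, Module.End.mul_apply, regularRep_u_pow_one, RingHom.coe_coe,
      regularRep_coeffHom, C_mul_X_pow_eq_monomial]

theorem eval₂_regularRep (a : TildeA K μ) (p : K[X][X]) :
    (regularRep K μ a p).eval₂ (coeffHom K μ : K[X] →+* TildeA K μ) (u K μ) =
      a * p.eval₂ (coeffHom K μ : K[X] →+* TildeA K μ) (u K μ) := by
  induction a using induction generalizing p with
  | algebraMap r =>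
    rw [← AlgHom.commutes (coeffHom K μ), regularRep_coeffHom, eval₂_C_mul_noncomm,
      RingHom.coe_coe]
  | u => exact (congrArg _ (regularRep_u K μ p)).trans (eval₂_X_mul_map (u_mul_coeffHom K μ) p)
  | w => rw [regularRep_w, eval₂_C_mul_noncomm, RingHom.coe_coe, coeffHom_X]
  | add a b ha hb => rw [map_add, LinearMap.add_apply, eval₂_add, ha, hb, add_mul]
  | mul a b ha hb => rw [map_mul, Module.End.mul_apply, ha, hb, mul_assoc]

theorem isSkewPolynomialRing : IsSkewPolynomialRing (twist K μ : K[X] →+* K[X])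
    (coeffHom K μ : K[X] →+* TildeA K μ) (u K μ) where
  mul_map := u_mul_coeffHom K μ
  bijective_eval₂ := by
    refine bijective_iff_has_inverse.2
      ⟨fun a => regularRep K μ a 1, regularRep_eval₂_one K μ, fun a => ?_⟩
    dsimp only
    rw [eval₂_regularRep, eval₂_one, mul_one]

end TildeA

theorem tildeA_has_nontrivial_stablyFree_right_ideal_general
    (K : Type) [Field K] (μ : K) (hμ : μ ≠ 0) :
    IsStablyFreeRight (TildeA K μ)
      (Submodule.comap (leftMulRight (1 + TildeA.u K μ))
        (Submodule.span (TildeA K μ)ᵐᵒᵖ {TildeA.w K μ})) ∧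
    ¬ Module.Free (TildeA K μ)ᵐᵒᵖ
      (Submodule.comap (leftMulRight (1 + TildeA.u K μ))
        (Submodule.span (TildeA K μ)ᵐᵒᵖ {TildeA.w K μ})) := by
  have hA := TildeA.isSkewPolynomialRing K μ
  have hxy := TildeA.twist_C_mul_X_add_one hμ
  have hcop : IsCoprime (C μ * X + 1 : K[X]) X := ⟨1, -C μ, by ring⟩
  have hstable := hA.isStablyFreeRight_rightColon X_ne_zero hxy hcop
  have hnotFree := hA.not_free_rightColon (TildeA.twist_injective hμ) not_isUnit_X hxy hcop
  rw [RingHom.coe_coe, TildeA.coeffHom_X] at hstable hnotFree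
  exact ⟨hstable, hnotFree⟩

/-- For `char K = 0` and `μ ≠ 0`, the right ideal
`K = {f ∈ Ã : (1+u)f ∈ ωÃ}` of `Ã` is stably free but not free as a right `Ã`-module. -/
theorem tildeA_has_nontrivial_stablyFree_right_ideal
    (K : Type) [Field K] [CharZero K] (μ : K) (hμ : μ ≠ 0) :
    IsStablyFreeRight (TildeA K μ)
      (Submodule.comap (leftMulRight (1 + TildeA.u K μ))
        (Submodule.span (TildeA K μ)ᵐᵒᵖ {TildeA.w K μ})) ∧
    ¬ Module.Free (TildeA K μ)ᵐᵒᵖ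
      (Submodule.comap (leftMulRight (1 + TildeA.u K μ))
        (Submodule.span (TildeA K μ)ᵐᵒᵖ {TildeA.w K μ})) :=
  tildeA_has_nontrivial_stablyFree_right_ideal_general K μ hμ
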